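/- If a, b ∈ R^m give rise to a regular S-pair and t = lcm(lp(‾a), lp(‾b)), then spair(a,b) ≠ 0 and 𝔰(spair(a,b)) equals the ⪯_t-maximum of (t/lp(‾a))⊗𝔰(a) and (t/lp(‾b))⊗𝔰(b). -/

import Mathlib

namespace SigGB

noncomputable section

/-- Power-products in `n` indeterminates, written additively as exponent vectors
(so the power-product `1` is `0`, and multiplication of power-products is `+`). -/
abbrev PP (n : ℕ) : Type := Fin n →₀ ℕ

/-- Terms: a power-product together with a component index (`t·e_i ↝ (t, i)`). -/
abbrev Term (n m : ℕ) : Type := PP n × Fin m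

/-- Multiplication of a term by a power-product: `t ⊗ (s·e_i) = (t·s)·e_i`. -/
def mulTerm {n m : ℕ} (t : PP n) (u : Term n m) : Term n m := (t + u.1, u.2)

/-- Divisibility of terms: `u ∣ v` iff `v = t ⊗ u` for some power-product `t`. -/
def termDvd {n m : ℕ} (u v : Term n m) : Prop := ∃ t : PP n, v = mulTerm t u

/-- Componentwise lcm of power-products. -/
noncomputable def lcmPP {n : ℕ} (s t : PP n) : PP n := Finsupp.zipWith max (max_self 0) s t

/-- Strict part of a relation. -/
def strict {α : Type*} (r : α → α → Prop) (x y : α) : Prop := r x y ∧ x ≠ y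

/-- `ple` is an admissible order on power-products and `tle` is a compatible
linear order on terms. -/
structure OrdersOK {n m : ℕ} (ple : PP n → PP n → Prop)
    (tle : Term n m → Term n m → Prop) : Prop where
  ple_refl : ∀ t, ple t t
  ple_trans : ∀ s t u, ple s t → ple t u → ple s u
  ple_antisymm : ∀ s t, ple s t → ple t s → s = t
  ple_total : ∀ s t, ple s t ∨ ple t s
  ple_one_le : ∀ t, ple 0 t
  ple_mul : ∀ (t s₁ s₂ : PP n), ple s₁ s₂ → ple (t + s₁) (t + s₂)
  tle_refl : ∀ u, tle u u
  tle_trans : ∀ u v w, tle u v → tle v w → tle u w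
  tle_antisymm : ∀ u v, tle u v → tle v u → u = v
  tle_total : ∀ u v, tle u v ∨ tle v u
  tle_mul : ∀ (t : PP n) (u v : Term n m), tle u v → tle (mulTerm t u) (mulTerm t v)
  tle_compat : ∀ (s t : PP n) (i j : Fin m), ple s t → i ≤ j → tle (s, i) (t, j)

variable {K : Type*} [Field K] {n m : ℕ} [NeZero m]

variable (f : Fin m → MvPolynomial (Fin n) K)
variable (ple : PP n → PP n → Prop)
variable (tle : Term n m → Term n m → Prop)

/-- The module homomorphism `R^m → R` determined by `e_i ↦ f i`, i.e. `a ↦ ‾a`. -/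
def bar (a : Fin m → MvPolynomial (Fin n) K) : MvPolynomial (Fin n) K := ∑ i, a i * f i

/-- Multiplication of a module element by a coefficient `c` and a power-product `t`. -/
noncomputable def monomMul (c : K) (t : PP n) (a : Fin m → MvPolynomial (Fin n) K) :
    Fin m → MvPolynomial (Fin n) K :=
  fun i => MvPolynomial.monomial t c * a i

/-- The coefficient of a term in a module element. -/
def coeffM (a : Fin m → MvPolynomial (Fin n) K) (u : Term n m) : K :=
  MvPolynomial.coeff u.1 (a u.2)

open Classical in
/-- Leading power-product of a polynomial w.r.t. `ple`
(junk value `0`, i.e. the power-product `1`, for the zero polynomial). -/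
noncomputable def lp (p : MvPolynomial (Fin n) K) : PP n :=
  if h : ∃ t, MvPolynomial.coeff t p ≠ 0 ∧ ∀ s, MvPolynomial.coeff s p ≠ 0 → ple s t
  then h.choose else 0

/-- Leading coefficient of a polynomial w.r.t. `ple`. -/
noncomputable def lc (p : MvPolynomial (Fin n) K) : K := MvPolynomial.coeff (lp ple p) p

open Classical in
/-- Signature of a module element: its `tle`-largest term with nonzero coefficient
(junk value for `0`). -/
noncomputable def sig (a : Fin m → MvPolynomial (Fin n) K) : Term n m :=
  if h : ∃ u, coeffM a u ≠ 0 ∧ ∀ v, coeffM a v ≠ 0 → tle v u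
  then h.choose else ((0 : PP n), (0 : Fin m))

/-- Leading coefficient of a module element. -/
noncomputable def lcM (a : Fin m → MvPolynomial (Fin n) K) : K := coeffM a (sig tle a)

/-- One-step s-reduction of `a` to `b` modulo `G`, witnessed by `g ∈ G` and the
power-product `t`. -/
def RedStepWith (G : Set (Fin m → MvPolynomial (Fin n) K))
    (a b g : Fin m → MvPolynomial (Fin n) K) (t : PP n) : Prop :=
  g ∈ G ∧ bar f g ≠ 0 ∧
    MvPolynomial.coeff (t + lp ple (bar f g)) (bar f a) ≠ 0 ∧
    b = a - monomMul (MvPolynomial.coeff (t + lp ple (bar f g)) (bar f a) / lc ple (bar f g)) t g ∧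
    tle (mulTerm t (sig tle g)) (sig tle a)

/-- The step witnessed by `g` and `t` is regular: `t ⊗ 𝔰(g) ≺_t 𝔰(a)`. -/
def RegularWith (a g : Fin m → MvPolynomial (Fin n) K) (t : PP n) : Prop :=
  strict tle (mulTerm t (sig tle g)) (sig tle a)

/-- The step witnessed by `g` and `t` is top: `t·lp(‾g) = lp(‾a)`. -/
def TopWith (a g : Fin m → MvPolynomial (Fin n) K) (t : PP n) : Prop :=
  t + lp ple (bar f g) = lp ple (bar f a)

/-- `a` s-reduces to `b` modulo `G` in one step. -/
def SigRedStep (G : Set (Fin m → MvPolynomial (Fin n) K))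
    (a b : Fin m → MvPolynomial (Fin n) K) : Prop :=
  ∃ g t, RedStepWith f ple tle G a b g t

/-- `a` regular s-reduces to `b` modulo `G` in one step. -/
def RegRedStep (G : Set (Fin m → MvPolynomial (Fin n) K))
    (a b : Fin m → MvPolynomial (Fin n) K) : Prop :=
  ∃ g t, RedStepWith f ple tle G a b g t ∧ RegularWith tle a g t

/-- `a` regular top s-reduces to `b` modulo `G` in one step. -/
def RegTopRedStep (G : Set (Fin m → MvPolynomial (Fin n) K))
    (a b : Fin m → MvPolynomial (Fin n) K) : Prop :=
  ∃ g t, RedStepWith f ple tle G a b g t ∧ RegularWith tle a g t ∧ TopWith f ple a g t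

/-- `a` is regular s-irreducible modulo `G`. -/
def RegIrred (G : Set (Fin m → MvPolynomial (Fin n) K))
    (a : Fin m → MvPolynomial (Fin n) K) : Prop :=
  ∀ b, ¬ RegRedStep f ple tle G a b

/-- `a` is regular top s-irreducible modulo `G`. -/
def RegTopIrred (G : Set (Fin m → MvPolynomial (Fin n) K))
    (a : Fin m → MvPolynomial (Fin n) K) : Prop :=
  ∀ b, ¬ RegTopRedStep f ple tle G a b

/-- `a` s-reduces to zero modulo `G`. -/
def SigRedZero (G : Set (Fin m → MvPolynomial (Fin n) K))
    (a : Fin m → MvPolynomial (Fin n) K) : Prop :=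
  ∃ b, Relation.ReflTransGen (SigRedStep f ple tle G) a b ∧ bar f b = 0

/-- `a` regular s-reduces to zero modulo `G`. -/
def RegRedZero (G : Set (Fin m → MvPolynomial (Fin n) K))
    (a : Fin m → MvPolynomial (Fin n) K) : Prop :=
  ∃ b, Relation.ReflTransGen (RegRedStep f ple tle G) a b ∧ bar f b = 0

/-- `G` is a signature Gröbner basis in the term `u`. -/
def IsSigGBIn (G : Set (Fin m → MvPolynomial (Fin n) K)) (u : Term n m) : Prop :=
  ∀ a : Fin m → MvPolynomial (Fin n) K, a ≠ 0 → sig tle a = u → SigRedZero f ple tle G a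

/-- `G` is a signature Gröbner basis up to the term `u`. -/
def IsSigGBUpto (G : Set (Fin m → MvPolynomial (Fin n) K)) (u : Term n m) : Prop :=
  ∀ v, strict tle v u → IsSigGBIn f ple tle G v

/-- `u` is a syzygy signature. -/
def IsSyzSig (u : Term n m) : Prop :=
  ∃ a : Fin m → MvPolynomial (Fin n) K, a ≠ 0 ∧ sig tle a = u ∧ bar f a = 0

/-- The sig-poly-pair `(𝔰(a), ‾a)` of a module element `a`. -/
noncomputable def sppOf (a : Fin m → MvPolynomial (Fin n) K) :
    Term n m × MvPolynomial (Fin n) K :=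
  (sig tle a, bar f a)

/-- `x` is a sig-poly-pair. -/
def IsSPP (x : Term n m × MvPolynomial (Fin n) K) : Prop :=
  ∃ a : Fin m → MvPolynomial (Fin n) K, a ≠ 0 ∧ sppOf f tle a = x

/-- `ro` is a rewrite order. -/
def IsRewriteOrder
    (ro : Term n m × MvPolynomial (Fin n) K → Term n m × MvPolynomial (Fin n) K → Prop) :
    Prop :=
  (∀ x, IsSPP f tle x → ro x x) ∧
  (∀ x y z, IsSPP f tle x → IsSPP f tle y → IsSPP f tle z → ro x y → ro y z → ro x z) ∧
  (∀ x y, IsSPP f tle x → IsSPP f tle y → (ro x y ∨ ro y x)) ∧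
  (∀ x y, IsSPP f tle x → IsSPP f tle y → ro x y → ro y x → x.1 = y.1) ∧
  (∀ (G : Set (Fin m → MvPolynomial (Fin n) K)) (a b : Fin m → MvPolynomial (Fin n) K),
    IsSigGBUpto f ple tle G (sig tle b) → a ∈ G → b ∈ G → a ≠ 0 → b ≠ 0 →
    termDvd (sig tle a) (sig tle b) → RegTopIrred f ple tle G b →
    ro (sppOf f tle a) (sppOf f tle b))

/-- `a` is a canonical rewriter in the term `u` w.r.t. `G` (for the rewrite order `ro`). -/
def IsCanonRewriter
    (ro : Term n m × MvPolynomial (Fin n) K → Term n m × MvPolynomial (Fin n) K → Prop)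
    (G : Set (Fin m → MvPolynomial (Fin n) K)) (u : Term n m)
    (a : Fin m → MvPolynomial (Fin n) K) : Prop :=
  a ∈ G ∧ a ≠ 0 ∧ termDvd (sig tle a) u ∧
    ∀ g ∈ G, g ≠ 0 → termDvd (sig tle g) u → ro (sppOf f tle g) (sppOf f tle a)

/-- `G` is a rewrite basis in the term `u` (for the rewrite order `ro`). -/
def IsRBIn
    (ro : Term n m × MvPolynomial (Fin n) K → Term n m × MvPolynomial (Fin n) K → Prop)
    (G : Set (Fin m → MvPolynomial (Fin n) K)) (u : Term n m) : Prop :=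
  IsSyzSig f tle u ∨
    ∃ g, IsCanonRewriter f tle ro G u g ∧
      RegTopIrred f ple tle G (monomMul (1 : K) (u.1 - (sig tle g).1) g)

/-- `G` is a rewrite basis up to the term `u` (for the rewrite order `ro`). -/
def IsRBUpto
    (ro : Term n m × MvPolynomial (Fin n) K → Term n m × MvPolynomial (Fin n) K → Prop)
    (G : Set (Fin m → MvPolynomial (Fin n) K)) (u : Term n m) : Prop :=
  ∀ v, strict tle v u → IsRBIn f ple tle ro G v

/-- The S-pair of two module elements. -/
noncomputable def spair (a b : Fin m → MvPolynomial (Fin n) K) :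
    Fin m → MvPolynomial (Fin n) K :=
  monomMul ((1 : K) / lc ple (bar f a))
      (lcmPP (lp ple (bar f a)) (lp ple (bar f b)) - lp ple (bar f a)) a -
    monomMul ((1 : K) / lc ple (bar f b))
      (lcmPP (lp ple (bar f a)) (lp ple (bar f b)) - lp ple (bar f b)) b

/-- `a` and `b` give rise to a regular S-pair. -/
def IsRegularSPair (a b : Fin m → MvPolynomial (Fin n) K) : Prop :=
  bar f a ≠ 0 ∧ bar f b ≠ 0 ∧
    mulTerm (lcmPP (lp ple (bar f a)) (lp ple (bar f b)) - lp ple (bar f a)) (sig tle a) ≠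
      mulTerm (lcmPP (lp ple (bar f a)) (lp ple (bar f b)) - lp ple (bar f b)) (sig tle b)

/-- `B` is a Gröbner basis of the ideal `I` w.r.t. `ple`. -/
def IsGroebnerBasis (B : Set (MvPolynomial (Fin n) K)) (I : Ideal (MvPolynomial (Fin n) K)) :
    Prop :=
  (∀ b ∈ B, b ∈ I) ∧ Ideal.span B = I ∧
    ∀ p ∈ I, p ≠ 0 → ∃ b ∈ B, b ≠ 0 ∧ ∃ t : PP n, lp ple p = t + lp ple b

/-- One step of ordinary polynomial reduction of `p` to `q` modulo `B`. -/
def PolyRedStep (B : Set (MvPolynomial (Fin n) K)) (p q : MvPolynomial (Fin n) K) : Prop :=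
  ∃ r ∈ B, r ≠ 0 ∧ ∃ t : PP n, MvPolynomial.coeff (t + lp ple r) p ≠ 0 ∧
    q = p - MvPolynomial.monomial t (MvPolynomial.coeff (t + lp ple r) p / lc ple r) * r

/-!
Multiplying a module element by a nonzero scalar and a power-product multiplies its signature by
that power-product. So the two multiples subtracted in a regular S-pair have distinct signatures;
the larger one occurs in only one of them and cannot cancel.
-/

section IsLeading

variable {α M : Type*} {r : α → α → Prop} {c d : α → M} {x y : α}

/-- `x` is an `r`-greatest point of the support of `c`. Taking for `c` the coefficient function of
a polynomial or of a module element gives the leading power-product and the signature. -/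
def IsLeading [Zero M] (r : α → α → Prop) (c : α → M) (x : α) : Prop :=
  c x ≠ 0 ∧ ∀ y, c y ≠ 0 → r y x

theorem exists_isLeading [Zero M] [IsTrans α r] [Std.Total r] (hfin : c.support.Finite)
    (hc : c ≠ 0) : ∃ x, IsLeading r c x := by
  have := hfin.to_subtype
  have := (Function.support_nonempty_iff.2 hc).to_subtype
  have hdir : Directed r ((↑) : c.support → α) := Std.Total.directed _
  obtain ⟨x, hx⟩ := hdir.finite_le id
  exact ⟨x, x.2, fun y hy => hx ⟨y, hy⟩⟩

namespace IsLeading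

theorem unique [Zero M] [Std.Antisymm r] (hx : IsLeading r c x) (hy : IsLeading r c y) : x = y :=
  antisymm_of r (hy.2 x hx.1) (hx.2 y hy.1)

variable [AddGroup M]

theorem neg (h : IsLeading r c x) : IsLeading r (-c) x := by
  simpa only [IsLeading, Pi.neg_apply, neg_ne_zero] using h

theorem sub_of_strict [IsTrans α r] [Std.Antisymm r] (hc : IsLeading r c x)
    (hd : IsLeading r d y) (hyx : strict r y x) : IsLeading r (c - d) x := by
  have hdx : d x = 0 := by
    by_contra hne
    exact hyx.2 (antisymm_of r hyx.1 (hd.2 x hne))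
  refine ⟨by simpa only [Pi.sub_apply, hdx, sub_zero] using hc.1, fun z hz => ?_⟩
  by_cases hcz : c z = 0
  · have hdz : d z ≠ 0 := fun hdz => hz (by rw [Pi.sub_apply, hcz, hdz, sub_zero])
    exact trans_of r (hd.2 z hdz) hyx.1
  · exact hc.2 z hcz

theorem exists_isLeading_sub [IsLinearOrder α r] (hc : IsLeading r c x) (hd : IsLeading r d y)
    (hxy : x ≠ y) : ∃ z, IsLeading r (c - d) z ∧ (z = x ∨ z = y) ∧ r x z ∧ r y z := by
  rcases total_of r x y with hle | hle
  · have hdc : IsLeading r (c - d) y := neg_sub d c ▸ (hd.sub_of_strict hc ⟨hle, hxy⟩).neg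
    exact ⟨y, hdc, Or.inr rfl, hle, refl_of r y⟩
  · exact ⟨x, hc.sub_of_strict hd ⟨hle, hxy.symm⟩, Or.inl rfl, refl_of r x, hle⟩

end IsLeading

end IsLeading

section Coefficients

omit [NeZero m]

variable {a : Fin m → MvPolynomial (Fin n) K}

theorem coeffM_sub (a b : Fin m → MvPolynomial (Fin n) K) :
    coeffM (a - b) = coeffM a - coeffM b :=
  funext fun u => MvPolynomial.coeff_sub _ u.1 (a u.2) (b u.2)

theorem coeffM_eq_zero_iff : coeffM a = 0 ↔ a = 0 := by
  simp only [funext_iff, MvPolynomial.ext_iff, Prod.forall, coeffM, Pi.zero_apply,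
    MvPolynomial.coeff_zero]
  exact forall_comm

theorem finite_support_coeffM (a : Fin m → MvPolynomial (Fin n) K) :
    (Function.support (coeffM a)).Finite := by
  refine (Set.finite_iUnion fun i => (a i).support.finite_toSet.image (·, i)).subset fun u hu => ?_
  exact Set.mem_iUnion.2 ⟨u.2, u.1, MvPolynomial.mem_support_iff.2 hu, rfl⟩

theorem coeffM_monomMul_mulTerm (c : K) (t : PP n) (a : Fin m → MvPolynomial (Fin n) K)
    (u : Term n m) : coeffM (monomMul c t a) (mulTerm t u) = c * coeffM a u :=
  MvPolynomial.coeff_monomial_mul u.1 t c (a u.2)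

theorem exists_mulTerm_eq_of_coeffM_monomMul_ne_zero {c : K} {t : PP n} {v : Term n m}
    (hv : coeffM (monomMul c t a) v ≠ 0) : ∃ u, mulTerm t u = v ∧ coeffM a u ≠ 0 := by
  rw [coeffM, monomMul, MvPolynomial.coeff_monomial_mul'] at hv
  obtain ⟨htv, hne⟩ := ite_ne_right_iff.1 hv
  exact ⟨(v.1 - t, v.2), Prod.ext (add_tsub_cancel_of_le htv) rfl, right_ne_zero_of_mul hne⟩

theorem ne_zero_of_bar_ne_zero {f : Fin m → MvPolynomial (Fin n) K} (h : bar f a ≠ 0) :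
    a ≠ 0 := by
  rintro rfl
  exact h (by simp only [bar, Pi.zero_apply, zero_mul, Finset.sum_const_zero])

end Coefficients

section LeadingTerms

variable {ple tle} {a : Fin m → MvPolynomial (Fin n) K} {u : Term n m}

theorem IsLeading.isLeading_lp {p : MvPolynomial (Fin n) K} {t : PP n}
    (h : IsLeading ple (fun s => MvPolynomial.coeff s p) t) :
    IsLeading ple (fun s => MvPolynomial.coeff s p) (lp ple p) := by
  rw [lp]
  split_ifs with hex
  · exact hex.choose_spec
  · exact absurd ⟨t, h⟩ hex

theorem lc_ne_zero [IsTrans (PP n) ple] [Std.Total ple] {p : MvPolynomial (Fin n) K}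
    (hp : p ≠ 0) : lc ple p ≠ 0 := by
  obtain ⟨t, ht⟩ := exists_isLeading (r := ple) (c := fun s => MvPolynomial.coeff s p)
    (p.support.finite_toSet.subset fun _ => MvPolynomial.mem_support_iff.2)
    (Function.ne_iff.2 (MvPolynomial.ne_zero_iff.1 hp))
  exact ht.isLeading_lp.1

namespace IsLeading

theorem isLeading_sig (h : IsLeading tle (coeffM a) u) :
    IsLeading tle (coeffM a) (sig tle a) := by
  rw [sig]
  split_ifs with hex
  · exact hex.choose_spec
  · exact absurd ⟨u, h⟩ hex

theorem sig_eq [Std.Antisymm tle] (h : IsLeading tle (coeffM a) u) : sig tle a = u :=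
  h.isLeading_sig.unique h

omit [NeZero m] in
theorem ne_zero (h : IsLeading tle (coeffM a) u) : a ≠ 0 :=
  coeffM_eq_zero_iff.not.1 fun ha => h.1 (congrFun ha u)

omit [NeZero m] in
theorem monomMul {c : K} {t : PP n} (hmul : ∀ v w, tle v w → tle (mulTerm t v) (mulTerm t w))
    (hc : c ≠ 0) (h : IsLeading tle (coeffM a) u) :
    IsLeading tle (coeffM (monomMul c t a)) (mulTerm t u) := by
  refine ⟨coeffM_monomMul_mulTerm c t a u ▸ mul_ne_zero hc h.1, fun v hv => ?_⟩
  obtain ⟨w, rfl, hw⟩ := exists_mulTerm_eq_of_coeffM_monomMul_ne_zero hv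
  exact hmul w u (h.2 w hw)

end IsLeading

theorem isLeading_sig_of_ne_zero [IsTrans (Term n m) tle] [Std.Total tle] (ha : a ≠ 0) :
    IsLeading tle (coeffM a) (sig tle a) := by
  obtain ⟨u, hu⟩ := exists_isLeading (r := tle) (finite_support_coeffM a)
    (coeffM_eq_zero_iff.not.2 ha)
  exact hu.isLeading_sig

end LeadingTerms

variable {ple tle} in
omit [NeZero m] in
theorem OrdersOK.isLinearOrder (hord : OrdersOK ple tle) :
    IsLinearOrder (PP n) ple ∧ IsLinearOrder (Term n m) tle :=
  ⟨{ refl := hord.ple_refl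
     trans := hord.ple_trans
     antisymm := hord.ple_antisymm
     total := hord.ple_total },
   { refl := hord.tle_refl
     trans := hord.tle_trans
     antisymm := hord.tle_antisymm
     total := hord.tle_total }⟩

theorem sig_of_regular_spair_general [IsTrans (PP n) ple] [Std.Total ple]
    [IsLinearOrder (Term n m) tle]
    (hmul : ∀ (t : PP n) (u v : Term n m), tle u v → tle (mulTerm t u) (mulTerm t v))
    (a b : Fin m → MvPolynomial (Fin n) K) (h : IsRegularSPair f ple tle a b)
    (t : PP n) (ht : t = lcmPP (lp ple (bar f a)) (lp ple (bar f b))) :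
    spair f ple a b ≠ 0 ∧
      (sig tle (spair f ple a b) = mulTerm (t - lp ple (bar f a)) (sig tle a) ∨
        sig tle (spair f ple a b) = mulTerm (t - lp ple (bar f b)) (sig tle b)) ∧
      tle (mulTerm (t - lp ple (bar f a)) (sig tle a)) (sig tle (spair f ple a b)) ∧
      tle (mulTerm (t - lp ple (bar f b)) (sig tle b)) (sig tle (spair f ple a b)) := by
  subst ht
  obtain ⟨ha, hb, hne⟩ := h
  have leading_multiple {g : Fin m → MvPolynomial (Fin n) K} (hg : bar f g ≠ 0) (s : PP n) :
      IsLeading tle (coeffM (monomMul (1 / lc ple (bar f g)) s g)) (mulTerm s (sig tle g)) :=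
    (isLeading_sig_of_ne_zero (ne_zero_of_bar_ne_zero hg)).monomMul (hmul s)
      (one_div_ne_zero (lc_ne_zero hg))
  obtain ⟨u, hu, hmax⟩ := (leading_multiple ha _).exists_isLeading_sub (leading_multiple hb _) hne
  rw [← coeffM_sub, ← spair] at hu
  rw [hu.sig_eq]
  exact ⟨hu.ne_zero, hmax⟩

/-- a regular S-pair is nonzero and its signature is the `tle`-maximum of
`(t/lp(‾a)) ⊗ 𝔰(a)` and `(t/lp(‾b)) ⊗ 𝔰(b)`, where `t = lcm(lp(‾a), lp(‾b))`. -/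
theorem sig_of_regular_spair (hord : OrdersOK ple tle)
    (a b : Fin m → MvPolynomial (Fin n) K)
    (h : IsRegularSPair f ple tle a b)
    (t : PP n) (ht : t = lcmPP (lp ple (bar f a)) (lp ple (bar f b))) :
    spair f ple a b ≠ 0 ∧
      (sig tle (spair f ple a b) = mulTerm (t - lp ple (bar f a)) (sig tle a) ∨
        sig tle (spair f ple a b) = mulTerm (t - lp ple (bar f b)) (sig tle b)) ∧
      tle (mulTerm (t - lp ple (bar f a)) (sig tle a)) (sig tle (spair f ple a b)) ∧
      tle (mulTerm (t - lp ple (bar f b)) (sig tle b)) (sig tle (spair f ple a b)) := by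
  obtain ⟨_, _⟩ := hord.isLinearOrder
  exact sig_of_regular_spair_general f ple tle hord.tle_mul a b h t ht

end

end SigGB
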